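/- For real ε in a neighbourhood of 0, set p(ε) = 4 + ε, c(ε) = 1 − 6/(p(ε)(p(ε)−1)), h₃(ε) = ((p(ε) − 3(p(ε)−1))² − 1)/(4 p(ε)(p(ε)−1)), h₅(ε) = ((p(ε) − 5(p(ε)−1))² − 1)/(4 p(ε)(p(ε)−1)), and G(ε) = (1/4)·(2c(ε) + h₃(ε)·(18h₃(ε) − 11)). Then the limit as ε → 0 (through ε ≠ 0) of G(ε)/(h₅(ε) − h₃(ε) − 2) exists and equals 35/24; consequently the algebraic indecomposability parameter β_{1,5} = −lim_{ε→0} G(ε)/(h₅(ε) − h₃(ε) − 2) of the logarithmic Ising model equals −35/24. -/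

import Mathlib

open Filter Topology

/-- The deformation parameter `p(ε) = 4 + ε` of the logarithmic Ising model. -/
noncomputable def pIsing (ε : ℝ) : ℝ := 4 + ε

/-- The central charge `c(ε) = 1 − 6/(p(ε)(p(ε)−1))`. -/
noncomputable def cIsing (ε : ℝ) : ℝ := 1 - 6 / (pIsing ε * (pIsing ε - 1))

/-- The Kac weight `h_{1,3}` at `p = 4 + ε`. -/
noncomputable def h3Ising (ε : ℝ) : ℝ :=
  ((pIsing ε - 3 * (pIsing ε - 1)) ^ 2 - 1) / (4 * pIsing ε * (pIsing ε - 1))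

/-- The Kac weight `h_{1,5}` at `p = 4 + ε`. -/
noncomputable def h5Ising (ε : ℝ) : ℝ :=
  ((pIsing ε - 5 * (pIsing ε - 1)) ^ 2 - 1) / (4 * pIsing ε * (pIsing ε - 1))

/-- The Virasoro norm `G(ε) = ⟨φ₂|φ₂⟩` of the level-two descendant
`φ₂ = (L₋₂ − (3/4)L₋₁²)|ρ⟩` at central charge `c(ε)`. -/
noncomputable def GIsing (ε : ℝ) : ℝ :=
  (1 / 4) * (2 * cIsing ε + h3Ising ε * (18 * h3Ising ε - 11))

/-!
Splitting `1 = (p - (p - 1))²` in the Kac formula makes `h_{1,3}` and `h_{1,5}` affine in `1 / p`.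
Both `G` and `h_{1,5} - h_{1,3} - 2` then visibly vanish to first order at `p = 4`. Cancelling the
common factor `p - 4 = ε` leaves a rational function of `p` that is continuous at `p = 4`, where
its value is `35 / 24`.
-/

section KacWeight

variable {K : Type*} [Field K]

/-- The Kac conformal weight `h_{r,s}(p)` at central charge `1 - 6 / (p * (p - 1))`. The Kac
labels `r` and `s` are field elements rather than integers, and the value is the junk `0` where
`4 * p * (p - 1) = 0`. -/
def kacWeight (r s p : K) : K :=
  ((p * r - (p - 1) * s) ^ 2 - 1) / (4 * p * (p - 1))

theorem kacWeight_eq [NeZero (2 : K)] (r s : K) {p : K} (hp₀ : p ≠ 0) (hp₁ : p ≠ 1) :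
    kacWeight r s p =
      (r ^ 2 - 1) / 4 * (p / (p - 1)) + (s ^ 2 - 1) / 4 * ((p - 1) / p) - (r * s - 1) / 2 := by
  have hfour : (4 : K) = 2 * 2 := by norm_num
  rw [kacWeight, hfour]
  field_simp
  ring

end KacWeight

theorem h3Ising_eq_kacWeight (ε : ℝ) : h3Ising ε = kacWeight 1 3 (pIsing ε) := by
  rw [h3Ising, kacWeight, mul_one, mul_comm 3]

theorem h5Ising_eq_kacWeight (ε : ℝ) : h5Ising ε = kacWeight 1 5 (pIsing ε) := by
  rw [h5Ising, kacWeight, mul_one, mul_comm 5]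

theorem pIsing_sub_four (ε : ℝ) : pIsing ε - 4 = ε :=
  add_sub_cancel_left 4 ε

theorem h3Ising_eq {ε : ℝ} (hp₀ : pIsing ε ≠ 0) (hp₁ : pIsing ε ≠ 1) :
    h3Ising ε = 1 - 2 / pIsing ε := by
  rw [h3Ising_eq_kacWeight, kacWeight_eq 1 3 hp₀ hp₁]
  field_simp
  ring

theorem h5Ising_eq {ε : ℝ} (hp₀ : pIsing ε ≠ 0) (hp₁ : pIsing ε ≠ 1) :
    h5Ising ε = 4 - 6 / pIsing ε := by
  rw [h5Ising_eq_kacWeight, kacWeight_eq 1 5 hp₀ hp₁]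
  field_simp
  ring

theorem h5Ising_sub_h3Ising_sub_two {ε : ℝ} (hp₀ : pIsing ε ≠ 0) (hp₁ : pIsing ε ≠ 1) :
    h5Ising ε - h3Ising ε - 2 = ε / pIsing ε := by
  calc h5Ising ε - h3Ising ε - 2
      = (pIsing ε - 4) / pIsing ε := by
        rw [h5Ising_eq hp₀ hp₁, h3Ising_eq hp₀ hp₁]
        field_simp
        ring
    _ = ε / pIsing ε := by rw [pIsing_sub_four]

theorem GIsing_eq {ε : ℝ} (hp₀ : pIsing ε ≠ 0) (hp₁ : pIsing ε ≠ 1) :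
    GIsing ε = ε * (9 * pIsing ε ^ 2 - 23 * pIsing ε + 18) /
      (4 * pIsing ε ^ 2 * (pIsing ε - 1)) := by
  calc GIsing ε
      = (pIsing ε - 4) * (9 * pIsing ε ^ 2 - 23 * pIsing ε + 18) /
          (4 * pIsing ε ^ 2 * (pIsing ε - 1)) := by
        rw [GIsing, cIsing, h3Ising_eq hp₀ hp₁]
        field_simp
        ring
    _ = ε * (9 * pIsing ε ^ 2 - 23 * pIsing ε + 18) / (4 * pIsing ε ^ 2 * (pIsing ε - 1)) := by
        rw [pIsing_sub_four]

theorem GIsing_div_h5Ising_sub_h3Ising_sub_two {ε : ℝ} (hp₀ : pIsing ε ≠ 0) (hp₁ : pIsing ε ≠ 1)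
    (hε : ε ≠ 0) :
    GIsing ε / (h5Ising ε - h3Ising ε - 2) =
      (9 * pIsing ε ^ 2 - 23 * pIsing ε + 18) / (4 * pIsing ε * (pIsing ε - 1)) := by
  rw [GIsing_eq hp₀ hp₁, h5Ising_sub_h3Ising_sub_two hp₀ hp₁]
  field_simp

theorem tendsto_pIsing : Tendsto pIsing (𝓝[≠] 0) (𝓝 4) := by
  have hcont : Continuous pIsing := continuous_const.add continuous_id
  have hp : pIsing 0 = 4 := add_zero 4
  exact (hcont.tendsto' 0 4 hp).mono_left nhdsWithin_le_nhds

/-- `lim_{ε→0} G(ε)/(h₅(ε) − h₃(ε) − 2) = 35/24`, hence the algebraic indecomposability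
parameter `β_{1,5} = −lim_{ε→0} G(ε)/(h₅(ε) − h₃(ε) − 2)` of the logarithmic Ising model
equals `−35/24`. -/
theorem beta_Ising :
    Tendsto (fun ε : ℝ => GIsing ε / (h5Ising ε - h3Ising ε - 2)) (𝓝[≠] 0) (𝓝 (35 / 24)) ∧
    Tendsto (fun ε : ℝ => -(GIsing ε / (h5Ising ε - h3Ising ε - 2))) (𝓝[≠] 0)
      (𝓝 (-(35 / 24))) := by
  have hcont : ContinuousAt (fun p : ℝ => (9 * p ^ 2 - 23 * p + 18) / (4 * p * (p - 1))) 4 :=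
    ContinuousAt.div (by fun_prop) (by fun_prop) (by norm_num)
  have hvalue : (9 * 4 ^ 2 - 23 * 4 + 18) / (4 * 4 * (4 - 1)) = (35 / 24 : ℝ) := by norm_num
  have hlim : Tendsto (fun ε => GIsing ε / (h5Ising ε - h3Ising ε - 2)) (𝓝[≠] 0)
      (𝓝 (35 / 24)) := by
    rw [← hvalue]
    refine (hcont.tendsto.comp tendsto_pIsing).congr' ?_
    filter_upwards [self_mem_nhdsWithin, tendsto_pIsing.eventually_ne (by norm_num : (4 : ℝ) ≠ 0),
      tendsto_pIsing.eventually_ne (by norm_num : (4 : ℝ) ≠ 1)] with ε hε hp₀ hp₁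
    exact (GIsing_div_h5Ising_sub_h3Ising_sub_two hp₀ hp₁ hε).symm
  exact ⟨hlim, hlim.neg⟩
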